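/- If ψ : ℝ_{>0} → ℝ_{>0} is bounded, then τ(ψ) ≥ 0. Moreover, if τ(ψ) > −b_n (including the case τ(ψ) = +∞), then S(ψ)^c = ∅, i.e., every g ∈ SL_n(ℝ) is ψ-Diophantine for the standard representation. -/

import Mathlib

open MeasureTheory Filter

attribute [local instance] Matrix.frobeniusNormedAddCommGroup

noncomputable section

/-- The Euclidean norm on `ι → ℝ`. -/
def eucNorm {ι : Type*} [Fintype ι] (v : ι → ℝ) : ℝ := Real.sqrt (∑ i, (v i) ^ 2)

/-- The first minimum of a set of vectors: the infimum of the Euclidean norms of its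
nonzero elements. -/
def firstMin {ι : Type*} [Fintype ι] (Λ : Set (ι → ℝ)) : ℝ :=
  sInf {r | ∃ v ∈ Λ, v ≠ 0 ∧ eucNorm v = r}

/-- The diagonal matrix `a_t = diag(e^{b₁ t}, …, e^{bₙ t})`. -/
def aMat {n : ℕ} (b : Fin n → ℝ) (t : ℝ) : Matrix (Fin n) (Fin n) ℝ :=
  Matrix.diagonal fun i => Real.exp (b i * t)

/-- The standard lattice `ℤ^ι` inside `ι → ℝ`. -/
def intLat (ι : Type*) [Fintype ι] : Set (ι → ℝ) :=
  {v | ∃ m : ι → ℤ, v = fun i => (m i : ℝ)}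

/-- `SL_n(ℝ)` as the set of real `n × n` matrices of determinant one. -/
def SLset (n : ℕ) : Set (Matrix (Fin n) (Fin n) ℝ) := {g | g.det = 1}

/-- The set of `ψ`-Diophantine elements of `SL_n(ℝ)` for the standard representation. -/
def SDio {n : ℕ} (b : Fin n → ℝ) (ψ : ℝ → ℝ) : Set (Matrix (Fin n) (Fin n) ℝ) :=
  {g | g ∈ SLset n ∧ ∃ C > 0, ∀ t > 0,
    C * ψ t ≤ firstMin ((fun v => (aMat b t * g).mulVec v) '' intLat (Fin n))}

/-- `τ(ψ) = liminf_{t → ∞} (-ln ψ(t))/t`, as an extended real number. -/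
def tauE (ψ : ℝ → ℝ) : EReal :=
  liminf (fun t : ℝ => ((-Real.log (ψ t) / t : ℝ) : EReal)) atTop

/-!
Boundedness of `ψ` gives `-log ψ(t) / t ≥ -log M / t → 0`, hence `τ(ψ) ≥ 0`. An invertible `g`
shrinks Euclidean lengths by at most a constant factor, so the first minimum of `g ℤⁿ` is positive,
and `a_t` can shrink it by at most the factor `e^{bₙ t}`. When `τ(ψ) > -bₙ`, the function `ψ` is
dominated by a multiple of `e^{bₙ t}`, hence by a multiple of the first minimum of `a_t g ℤⁿ`.
-/

section DecayRate

variable {ψ : ℝ → ℝ} {c : ℝ}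

theorem tauE_nonneg_of_isBoundedUnder (hpos : ∀ᶠ t in atTop, 0 < ψ t)
    (hbdd : IsBoundedUnder (· ≤ ·) atTop ψ) : 0 ≤ tauE ψ := by
  obtain ⟨M, hM⟩ := hbdd.eventually_le
  have hlim : Tendsto (fun t : ℝ => ((-Real.log M / t : ℝ) : EReal)) atTop (nhds 0) :=
    (continuous_coe_real_ereal.tendsto 0).comp (tendsto_const_nhds.div_atTop tendsto_id)
  rw [tauE, ← hlim.liminf_eq]
  refine liminf_le_liminf ?_
  filter_upwards [hpos, hM, eventually_gt_atTop 0] with t hψ hψM ht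
  have hlog : Real.log (ψ t) ≤ Real.log M := Real.log_le_log hψ hψM
  exact EReal.coe_le_coe_iff.2 (by gcongr)

theorem eventually_le_exp_of_lt_tauE (hc : (c : EReal) < tauE ψ) :
    ∀ᶠ t in atTop, ψ t ≤ Real.exp (-c * t) := by
  filter_upwards [eventually_lt_of_lt_liminf hc, eventually_gt_atTop 0] with t hct ht
  have hlog : c * t < -Real.log (ψ t) := (lt_div_iff₀ ht).1 (EReal.coe_lt_coe_iff.1 hct)
  exact (Real.le_exp_log _).trans (Real.exp_le_exp.2 (by linarith))

theorem exists_forall_le_mul_exp_of_lt_tauE (hbdd : ∀ T, BddAbove (ψ '' Set.Ioc 0 T))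
    (hc : (c : EReal) < tauE ψ) : ∃ D > 0, ∀ t > 0, ψ t ≤ D * Real.exp (-c * t) := by
  obtain ⟨T, hT⟩ := eventually_atTop.1 (eventually_le_exp_of_lt_tauE hc)
  obtain ⟨M, hM⟩ := hbdd T
  refine ⟨max 1 (|M| * Real.exp (|c| * T)), by positivity, fun t ht => ?_⟩
  rcases le_total T t with hTt | htT
  · calc ψ t ≤ 1 * Real.exp (-c * t) := by simpa only [one_mul] using hT t hTt
      _ ≤ _ := by gcongr; exact le_max_left _ _
  · have hct : c * t ≤ |c| * T := by
      gcongr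
      exact le_abs_self c
    calc ψ t ≤ |M| := (hM ⟨t, ⟨ht, htT⟩, rfl⟩).trans (le_abs_self M)
      _ ≤ |M| * Real.exp (|c| * T + -c * t) :=
        le_mul_of_one_le_right (abs_nonneg M) (Real.one_le_exp (by linarith))
      _ = |M| * Real.exp (|c| * T) * Real.exp (-c * t) := by rw [Real.exp_add, mul_assoc]
      _ ≤ _ := by gcongr; exact le_max_right _ _

end DecayRate

section FirstMin

variable {ι κ : Type*} [Fintype ι] [Fintype κ]

theorem eucNorm_eq_norm_toLp (v : ι → ℝ) : eucNorm v = ‖WithLp.toLp 2 v‖ := by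
  simp only [eucNorm, EuclideanSpace.norm_eq, Real.norm_eq_abs, sq_abs]

theorem abs_le_eucNorm (v : ι → ℝ) (i : ι) : |v i| ≤ eucNorm v := by
  rw [eucNorm_eq_norm_toLp]
  exact PiLp.norm_apply_le (WithLp.toLp 2 v) i

theorem eucNorm_pos_iff {v : ι → ℝ} : 0 < eucNorm v ↔ v ≠ 0 := by
  rw [eucNorm_eq_norm_toLp, norm_pos_iff, Ne, WithLp.toLp_eq_zero]

theorem firstMin_nonneg (Λ : Set (ι → ℝ)) : 0 ≤ firstMin Λ :=
  Real.sInf_nonneg (by rintro _ ⟨v, -, -, rfl⟩; exact Real.sqrt_nonneg _)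

theorem firstMin_le {Λ : Set (ι → ℝ)} {v : ι → ℝ} (hv : v ∈ Λ) (hv0 : v ≠ 0) :
    firstMin Λ ≤ eucNorm v :=
  csInf_le ⟨0, by rintro _ ⟨w, -, -, rfl⟩; exact Real.sqrt_nonneg _⟩ ⟨v, hv, hv0, rfl⟩

theorem le_firstMin {Λ : Set (ι → ℝ)} (hΛ : ∃ v ∈ Λ, v ≠ 0) {r : ℝ}
    (hr : ∀ v ∈ Λ, v ≠ 0 → r ≤ eucNorm v) : r ≤ firstMin Λ := by
  obtain ⟨v, hv, hv0⟩ := hΛ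
  refine le_csInf ⟨_, v, hv, hv0, rfl⟩ ?_
  rintro _ ⟨w, hw, hw0, rfl⟩
  exact hr w hw hw0

theorem one_le_firstMin_intLat [Nonempty ι] : 1 ≤ firstMin (intLat ι) := by
  have hone : (1 : ι → ℝ) ∈ intLat ι := ⟨1, by ext; simp⟩
  refine le_firstMin ⟨1, hone, one_ne_zero⟩ ?_
  rintro _ ⟨m, rfl⟩ hm
  obtain ⟨i, hi⟩ := Function.ne_iff.1 hm
  have hmi : (1 : ℝ) ≤ |(m i : ℝ)| := mod_cast Int.one_le_abs (Int.cast_ne_zero.1 hi)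
  exact hmi.trans (abs_le_eucNorm (fun i => (m i : ℝ)) i)

theorem firstMin_eq_zero_of_forall_eq_zero {Λ : Set (ι → ℝ)} (hΛ : ∀ v ∈ Λ, v = 0) :
    firstMin Λ = 0 := by
  have hempty : {r | ∃ v ∈ Λ, v ≠ 0 ∧ eucNorm v = r} = ∅ :=
    Set.eq_empty_of_forall_notMem fun _ ⟨v, hv, hv0, _⟩ => hv0 (hΛ v hv)
  rw [firstMin, hempty, Real.sInf_empty]

theorem mul_firstMin_le_firstMin_image_mulVec {A : Matrix κ ι ℝ} {r : ℝ} (hr : 0 < r)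
    (hA : ∀ v, r * eucNorm v ≤ eucNorm (A.mulVec v)) (Λ : Set (ι → ℝ)) :
    r * firstMin Λ ≤ firstMin (A.mulVec '' Λ) := by
  by_cases hΛ : ∃ v ∈ Λ, v ≠ 0
  · obtain ⟨v, hv, hv0⟩ := hΛ
    have hAv : A.mulVec v ≠ 0 :=
      eucNorm_pos_iff.1 ((mul_pos hr (eucNorm_pos_iff.2 hv0)).trans_le (hA v))
    refine le_firstMin ⟨_, Set.mem_image_of_mem _ hv, hAv⟩ ?_
    rintro _ ⟨w, hw, rfl⟩ hAw
    have hw0 : w ≠ 0 := fun h => hAw (h ▸ A.mulVec_zero)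
    exact (mul_le_mul_of_nonneg_left (firstMin_le hw hw0) hr.le).trans (hA w)
  · push Not at hΛ
    rw [firstMin_eq_zero_of_forall_eq_zero hΛ, mul_zero]
    exact firstMin_nonneg _

theorem exists_pos_forall_mul_eucNorm_le_of_injective {A : Matrix κ ι ℝ}
    (hA : Function.Injective A.mulVec) :
    ∃ r > 0, ∀ v, r * eucNorm v ≤ eucNorm (A.mulVec v) := by
  classical
  have hker : LinearMap.ker (Matrix.toEuclideanLin A) = ⊥ :=
    LinearMap.ker_eq_bot.2 ((WithLp.toLp_injective 2).comp (hA.comp (WithLp.ofLp_injective 2)))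
  obtain ⟨K, hK, hanti⟩ := (Matrix.toEuclideanLin A).exists_antilipschitzWith hker
  refine ⟨(K : ℝ)⁻¹, inv_pos.2 hK, fun v => ?_⟩
  rw [inv_mul_le_iff₀ (NNReal.coe_pos.2 hK), eucNorm_eq_norm_toLp, eucNorm_eq_norm_toLp]
  exact hanti.le_mul_norm (map_zero _) (WithLp.toLp 2 v)

theorem firstMin_image_intLat_pos [Nonempty ι] {A : Matrix κ ι ℝ}
    (hA : Function.Injective A.mulVec) : 0 < firstMin (A.mulVec '' intLat ι) := by
  obtain ⟨r, hr, hrA⟩ := exists_pos_forall_mul_eucNorm_le_of_injective hA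
  have hpos : 0 < firstMin (intLat ι) := one_pos.trans_le one_le_firstMin_intLat
  exact (mul_pos hr hpos).trans_le (mul_firstMin_le_firstMin_image_mulVec hr hrA _)

end FirstMin

section DiagonalFlow

variable {n : ℕ} {b : Fin n → ℝ} {c : ℝ}

theorem mulVec_injective_of_mem_SLset {g : Matrix (Fin n) (Fin n) ℝ} (hg : g ∈ SLset n) :
    Function.Injective g.mulVec := by
  have hdet : g.det = 1 := hg
  refine Matrix.mulVec_injective_of_isUnit ((Matrix.isUnit_iff_isUnit_det g).2 ?_)
  rw [hdet]
  exact isUnit_one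

theorem exp_mul_eucNorm_le_eucNorm_aMat_mulVec (hc : ∀ i, c ≤ b i) {t : ℝ} (ht : 0 ≤ t)
    (v : Fin n → ℝ) : Real.exp (c * t) * eucNorm v ≤ eucNorm ((aMat b t).mulVec v) := by
  rw [eucNorm, eucNorm, ← Real.sqrt_sq (Real.exp_pos (c * t)).le,
    ← Real.sqrt_mul (sq_nonneg _), Finset.mul_sum]
  refine Real.sqrt_le_sqrt (Finset.sum_le_sum fun i _ => ?_)
  rw [aMat, Matrix.mulVec_diagonal, mul_pow]
  have hi := hc i
  gcongr

theorem exists_forall_mul_le_firstMin_aMat_image (hc : ∀ i, c ≤ b i) {ψ : ℝ → ℝ}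
    (hbdd : ∀ T, BddAbove (ψ '' Set.Ioc 0 T)) (hτ : ((-c : ℝ) : EReal) < tauE ψ)
    {Λ : Set (Fin n → ℝ)} (hΛ : 0 < firstMin Λ) :
    ∃ C > 0, ∀ t > 0, C * ψ t ≤ firstMin ((aMat b t).mulVec '' Λ) := by
  obtain ⟨D, hD, hψ⟩ := exists_forall_le_mul_exp_of_lt_tauE hbdd hτ
  refine ⟨firstMin Λ / D, div_pos hΛ hD, fun t ht => ?_⟩
  calc firstMin Λ / D * ψ t ≤ firstMin Λ / D * (D * Real.exp (c * t)) := by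
        gcongr
        simpa only [neg_neg] using hψ t ht
    _ = Real.exp (c * t) * firstMin Λ := by field_simp
    _ ≤ firstMin ((aMat b t).mulVec '' Λ) :=
      mul_firstMin_le_firstMin_image_mulVec (Real.exp_pos _)
        (exp_mul_eucNorm_le_eucNorm_aMat_mulVec hc ht.le) Λ

end DiagonalFlow

theorem tauE_nonneg_and_SDio_compl_empty_of_tau_gt_general
    {n : ℕ} [NeZero n] {b : Fin n → ℝ} {c : ℝ} (hc : ∀ i, c ≤ b i)
    {ψ : ℝ → ℝ} (hψpos : ∀ t > 0, 0 < ψ t) :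
    (IsBoundedUnder (· ≤ ·) atTop ψ → 0 ≤ tauE ψ) ∧
      ((∀ T, BddAbove (ψ '' Set.Ioc 0 T)) → ((-c : ℝ) : EReal) < tauE ψ →
        SLset n \ SDio b ψ = ∅) := by
  refine ⟨tauE_nonneg_of_isBoundedUnder ((eventually_gt_atTop 0).mono hψpos),
    fun hbdd hτ => Set.sdiff_eq_empty.2 fun g hg => ⟨hg, ?_⟩⟩
  simpa only [Set.image_image, Matrix.mulVec_mulVec] using
    exists_forall_mul_le_firstMin_aMat_image hc hbdd hτ
      (firstMin_image_intLat_pos (mulVec_injective_of_mem_SLset hg))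

theorem tauE_nonneg_and_SDio_compl_empty_of_tau_gt
    (n : ℕ) (hn : 2 ≤ n) (b : Fin n → ℝ)
    (hmono : ∀ i j : Fin n, i ≤ j → b j ≤ b i)
    (hsum : ∑ i, b i = 0) (hb : b ≠ 0)
    (ψ : ℝ → ℝ) (hψpos : ∀ t > 0, 0 < ψ t)
    (hbdd : ∃ M : ℝ, ∀ t > 0, ψ t ≤ M) :
    (0 : EReal) ≤ tauE ψ ∧
      (((-(b ⟨n - 1, by omega⟩) : ℝ) : EReal) < tauE ψ → SLset n \ SDio b ψ = ∅) := by
  obtain ⟨M, hM⟩ := hbdd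
  have : NeZero n := ⟨by omega⟩
  have hmin : ∀ i, b ⟨n - 1, by omega⟩ ≤ b i := fun i => hmono i _ (Nat.le_sub_one_of_lt i.isLt)
  obtain ⟨hnonneg, hempty⟩ := tauE_nonneg_and_SDio_compl_empty_of_tau_gt_general hmin hψpos
  exact ⟨hnonneg (isBoundedUnder_of_eventually_le ((eventually_gt_atTop 0).mono hM)),
    hempty fun _ => ⟨M, Set.forall_mem_image.2 fun t ht => hM t ht.1⟩⟩

end
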